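/- Let l ≥ 1 be an integer and let α, β be nonzero real numbers. There exists T₀ > 0 such that for every t ≥ T₀: if α·F_{4l}(1/2+it) + β·4ζ(1/2+it)L₋₄(1/2+it) = 0, then F_{4l}(1/2+it) = 0 and ζ(1/2+it)L₋₄(1/2+it) = 0. -/

import Mathlib

/-!
Put `s = 1/2 + it` and consider `W(s) = π⁻ˢ Γ(s) ζ(s) L₋₄(s)` and
`M(s) = π^(-(s+2l)) Γ(s+2l) F(s)`. Both are invariant under `s ↦ 1 - s` and commute with complex
conjugation, so both are real on the critical line. Since `Γ(s+2l) = P(s) Γ(s)` with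
`P(s) = s (s+1) ⋯ (s+2l-1)`, multiplying the vanishing combination by `π⁻ˢ Γ(s+2l)` gives
`α π^(2l) M(s) + 4 β P(s) W(s) = 0`. Taking imaginary parts yields `Im P(s) · W(s) = 0`, and
`Im P(1/2 + it)` is nonzero for large `t` (`exists_prod_im_ne_zero`), because
`P(1/2 + it) / (it)²ˡ` is a polynomial in `x = 1/t` whose imaginary part has derivative
`-∑ (1/2 + j) ≠ 0` at `x = 0`. Hence `W(s) = 0`, so `ζ(s) L₋₄(s) = 0`, and then `F(s) = 0`.

The symmetry of `W` (`completed_zetaL_symm`) follows from the functional equations of `ζ` and of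
the primitive odd character modulo `4`, joined by the duplication formula
`Γ_ℝ(s) Γ_ℝ(s+1) = Γ_ℂ(s)`.

The symmetry of `M` comes from `θₖ(t) = ∑ (p₁ + i p₂)ᵏ exp(-π t (p₁² + p₂²))`. Its exponential
generating function `∑ₖ (2πiz)ᵏ θₖ(t) / k!` is the product of the Jacobi theta functions at `z`
and at `iz`. In the transformation law `t ↦ 1/t` of this product the Gaussian factors cancel, as
`z² + (iz)² = 0`, and comparing Taylor coefficients in `z` gives the law of weight `k + 1` for `θₖ`
(`latTheta_inv`). For `k = 4l` the Mellin transform of `Re θₖ` at `s + 2l` is `M(s)`: by termwise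
integration for `Re s > 1` (`mellin_latThetaRe_eq`), then by analytic continuation for `Re s > 0`
(`completed_eq_mellin`).
-/

/-- The angle `θ_{p₁,p₂} = arg(p₁ + i p₂)` of a lattice point. -/
noncomputable def latticeAngle (p : ℤ × ℤ) : ℝ :=
  Complex.arg ((p.1 : ℂ) + (p.2 : ℂ) * Complex.I)

/-- The angular lattice sum `𝒞(n,m;s)`. -/
noncomputable def latC (n m : ℕ) (s : ℂ) : ℂ :=
  ∑' p : {p : ℤ × ℤ // p ≠ 0},
    ((Real.cos ((m : ℝ) * latticeAngle p.1) : ℂ)) ^ n /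
      (((p.1.1 : ℂ)) ^ 2 + ((p.1.2 : ℂ)) ^ 2) ^ s

/-- The angular lattice sum `𝒮(n,m;s)`. -/
noncomputable def latS (n m : ℕ) (s : ℂ) : ℂ :=
  ∑' p : {p : ℤ × ℤ // p ≠ 0},
    ((Real.sin ((m : ℝ) * latticeAngle p.1) : ℂ)) ^ n /
      (((p.1.1 : ℂ)) ^ 2 + ((p.1.2 : ℂ)) ^ 2) ^ s

open Complex Filter Topology Set

/-! ### Theta series with the harmonic polynomials `(p₁ + i p₂)ᵏ` -/

/-- The Gaussian integer `p₁ + i p₂`, as a complex number, attached to a lattice point. -/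
noncomputable def gaussPt (p : ℤ × ℤ) : ℂ := (p.1 : ℂ) + (p.2 : ℂ) * I

/-- The quadratic form `p₁² + p₂²`. -/
def latQ (p : ℤ × ℤ) : ℝ := (p.1 : ℝ) ^ 2 + (p.2 : ℝ) ^ 2

/-- The theta series `∑ (p₁ + i p₂)ᵏ exp(-π t (p₁² + p₂²))` over all of `ℤ²`. -/
noncomputable def latTheta (k : ℕ) (t : ℝ) : ℂ :=
  ∑' p : ℤ × ℤ, gaussPt p ^ k * (Real.exp (-Real.pi * latQ p * t) : ℂ)

lemma norm_gaussPt_le (p : ℤ × ℤ) : ‖gaussPt p‖ ≤ |(p.1 : ℝ)| + |(p.2 : ℝ)| := by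
  refine (norm_add_le _ _).trans ?_
  simp

lemma latQ_nonneg (p : ℤ × ℤ) : 0 ≤ latQ p := by unfold latQ; positivity

lemma norm_gaussPt_sq (p : ℤ × ℤ) : ‖gaussPt p‖ ^ 2 = latQ p := by
  rw [← Complex.normSq_eq_norm_sq, Complex.normSq_apply]
  simp [gaussPt, latQ, sq]

lemma gaussPt_zero : gaussPt 0 = 0 := by simp [gaussPt]

lemma one_le_latQ {p : ℤ × ℤ} (hp : p ≠ 0) : 1 ≤ latQ p := by
  have h : (1 : ℤ) ≤ p.1 ^ 2 + p.2 ^ 2 := by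
    by_contra! h
    have h1 : p.1 = 0 := by nlinarith [sq_nonneg p.1, sq_nonneg p.2]
    have h2 : p.2 = 0 := by nlinarith [sq_nonneg p.1, sq_nonneg p.2]
    exact hp (Prod.ext h1 h2)
  unfold latQ
  exact_mod_cast h

lemma summable_exp_gauss_int (R : ℝ) {t : ℝ} (ht : 0 < t) :
    Summable fun n : ℤ ↦ Real.exp (R * |(n : ℝ)|) * Real.exp (-Real.pi * (n : ℝ) ^ 2 * t) := by
  have h := summable_pow_mul_jacobiTheta₂_term_bound (R / (2 * Real.pi)) ht 0
  refine h.congr fun n ↦ ?_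
  rw [← Real.exp_add, pow_zero, one_mul]
  congr 1
  have := Real.pi_ne_zero
  push_cast
  field_simp
  ring

/-- The Gaussian weights beat any exponential in `‖p₁ + i p₂‖`. -/
lemma summable_exp_gauss (R : ℝ) (hR : 0 ≤ R) {t : ℝ} (ht : 0 < t) :
    Summable fun p : ℤ × ℤ ↦
      Real.exp (R * ‖gaussPt p‖) * Real.exp (-Real.pi * latQ p * t) := by
  have h := (summable_exp_gauss_int R ht).mul_of_nonneg (summable_exp_gauss_int R ht)
    (fun _ ↦ by positivity) (fun _ ↦ by positivity)
  refine h.of_nonneg_of_le (fun _ ↦ by positivity) fun p ↦ ?_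
  simp only [← Real.exp_add]
  rw [Real.exp_le_exp]
  have := mul_le_mul_of_nonneg_left (norm_gaussPt_le p) hR
  unfold latQ
  nlinarith

lemma summable_latTheta_norm (k : ℕ) {t : ℝ} (ht : 0 < t) :
    Summable fun p : ℤ × ℤ ↦ ‖gaussPt p‖ ^ k * Real.exp (-Real.pi * latQ p * t) := by
  refine ((summable_exp_gauss 1 zero_le_one ht).mul_left (k.factorial : ℝ)).of_nonneg_of_le
    (fun _ ↦ by positivity) fun p ↦ ?_
  rw [← mul_assoc, one_mul]
  gcongr
  have := Real.pow_div_factorial_le_exp _ (norm_nonneg (gaussPt p)) k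
  rwa [div_le_iff₀' (by positivity)] at this

lemma hasSum_latTheta (k : ℕ) {t : ℝ} (ht : 0 < t) :
    HasSum (fun p : ℤ × ℤ ↦ gaussPt p ^ k * (Real.exp (-Real.pi * latQ p * t) : ℂ))
      (latTheta k t) := by
  refine Summable.hasSum (Summable.of_norm ((summable_latTheta_norm k ht).congr fun p ↦ ?_))
  rw [norm_mul, norm_pow, Complex.norm_real, Real.norm_of_nonneg (by positivity)]

/-- The exponential generating function of the `latTheta k t`, a product of two Jacobi theta
functions. -/
lemma tsum_exp_eq_jacobi (z : ℂ) {t : ℝ} (ht : 0 < t) :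
    ∑' p : ℤ × ℤ, cexp (2 * Real.pi * I * z * gaussPt p) *
        (Real.exp (-Real.pi * latQ p * t) : ℂ) =
      jacobiTheta₂ z (I * t) * jacobiTheta₂ (I * z) (I * t) := by
  have him : 0 < (I * (t : ℂ)).im := by simpa using ht
  have hs (w : ℂ) : Summable fun n : ℤ ↦ ‖jacobiTheta₂_term n w (I * t)‖ :=
    ((summable_jacobiTheta₂_term_iff w _).mpr him).norm
  rw [jacobiTheta₂, jacobiTheta₂, tsum_mul_tsum_of_summable_norm (hs _) (hs _)]
  refine tsum_congr fun p ↦ ?_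
  rw [jacobiTheta₂_term, jacobiTheta₂_term, ofReal_exp, ← Complex.exp_add, ← Complex.exp_add]
  congr 1
  simp only [gaussPt, latQ]
  push_cast
  linear_combination (-(Real.pi * t * ((p.1:ℂ) ^ 2 + p.2 ^ 2))) * I_sq

/-- The Taylor expansion in `z` of the generating function has the theta series as coefficients. -/
lemma tsum_exp_eq_latTheta (z : ℂ) {t : ℝ} (ht : 0 < t) :
    ∑' p : ℤ × ℤ, cexp (2 * Real.pi * I * z * gaussPt p) *
        (Real.exp (-Real.pi * latQ p * t) : ℂ) =
      ∑' k : ℕ, ((2 * Real.pi * I) ^ k / k.factorial * latTheta k t) * z ^ k := by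
  set f : ℤ × ℤ → ℕ → ℂ := fun p k ↦ (2 * Real.pi * I * z * gaussPt p) ^ k / k.factorial *
    (Real.exp (-Real.pi * latQ p * t) : ℂ)
  have hnorm (x : ℂ) : HasSum (fun k : ℕ ↦ ‖x ^ k / k.factorial‖) (Real.exp ‖x‖) := by
    have := NormedSpace.expSeries_div_hasSum_exp (‖x‖ : ℝ)
    rw [← Real.exp_eq_exp_ℝ] at this
    simpa using this
  have hfn (p : ℤ × ℤ) : HasSum (fun k ↦ ‖f p k‖)
      (Real.exp (‖2 * Real.pi * I * z‖ * ‖gaussPt p‖) * Real.exp (-Real.pi * latQ p * t)) := by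
    have := (hnorm (2 * Real.pi * I * z * gaussPt p)).mul_right
      (Real.exp (-Real.pi * latQ p * t))
    rw [norm_mul _ (gaussPt p)] at this
    refine this.congr_fun fun k ↦ ?_
    simp only [f]
    rw [norm_mul _ (Complex.ofReal _), Complex.norm_real, Real.norm_of_nonneg (Real.exp_pos _).le]
  have hsum : Summable (Function.uncurry f) := by
    refine Summable.of_norm ?_
    rw [summable_prod_of_nonneg (fun _ ↦ norm_nonneg _)]
    refine ⟨fun p ↦ (hfn p).summable, ?_⟩
    refine (summable_exp_gauss ‖2 * Real.pi * I * z‖ (norm_nonneg _) ht).congr fun p ↦ ?_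
    exact (hfn p).tsum_eq.symm
  have h1 (p : ℤ × ℤ) : cexp (2 * Real.pi * I * z * gaussPt p) *
        (Real.exp (-Real.pi * latQ p * t) : ℂ) = ∑' k, f p k := by
    simp only [f]
    rw [tsum_mul_right, Complex.exp_eq_exp_ℂ, NormedSpace.exp_eq_tsum_div]
  simp_rw [h1]
  rw [← hsum.tsum_comm]
  refine tsum_congr fun k ↦ ?_
  rw [latTheta, ← tsum_mul_left, ← tsum_mul_right]
  refine tsum_congr fun p ↦ ?_
  simp only [f]
  ring

/-- The transformation law of the generating function: the Gaussian factors `exp(-π z² / t)` and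
`exp(-π (iz)² / t)` coming from the two Jacobi theta functions cancel. -/
lemma jacobi_prod_inv (z : ℂ) {t : ℝ} (ht : 0 < t) :
    jacobiTheta₂ z (I * t) * jacobiTheta₂ (I * z) (I * t) =
      (1 / t : ℂ) * (jacobiTheta₂ (-I * z / t) (I * (t⁻¹ : ℝ)) *
        jacobiTheta₂ (I * (-I * z / t)) (I * (t⁻¹ : ℝ))) := by
  have ht' : (t : ℂ) ≠ 0 := by exact_mod_cast ht.ne'
  have hI := I_ne_zero
  rw [jacobiTheta₂_functional_equation z, jacobiTheta₂_functional_equation (I * z)]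
  have e1 : z / (I * t) = -I * z / t := by
    field_simp; linear_combination z * I_sq
  have e2 : I * z / (I * t) = I * (-I * z / t) := by
    field_simp; linear_combination z * I_sq
  have e3 : -1 / (I * (t : ℂ)) = I * (t⁻¹ : ℝ) := by
    push_cast; field_simp; linear_combination - I_sq
  have e4 : -I * (I * (t : ℂ)) = t := by linear_combination (-(t : ℂ)) * I_sq
  have e5 : (t : ℂ) ^ (1 / 2 : ℂ) * (t : ℂ) ^ (1 / 2 : ℂ) = t := by
    rw [← Complex.cpow_add _ _ ht']; norm_num
  have e6 : cexp (-Real.pi * I * z ^ 2 / (I * t)) *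
      cexp (-Real.pi * I * (I * z) ^ 2 / (I * t)) = 1 := by
    rw [← Complex.exp_add, mul_pow, I_sq]
    convert Complex.exp_zero using 2
    ring
  rw [e1, e2, e3, e4]
  have e7 : (1 / t : ℂ) = 1 / (t : ℂ) ^ (1 / 2 : ℂ) * (1 / (t : ℂ) ^ (1 / 2 : ℂ)) := by
    rw [div_mul_div_comm, e5, one_mul]
  rw [e7]
  linear_combination (1 / (t : ℂ) ^ (1 / 2 : ℂ) * (1 / (t : ℂ) ^ (1 / 2 : ℂ)) *
    (jacobiTheta₂ (-I * z / t) (I * (t⁻¹ : ℝ)) *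
        jacobiTheta₂ (I * (-I * z / t)) (I * (t⁻¹ : ℝ)))) * e6

/-- Two everywhere absolutely convergent power series with the same sum have the same
coefficients. -/
lemma coeff_eq_of_tsum_eq {c d : ℕ → ℂ} (hc : ∀ r : NNReal, Summable fun k ↦ ‖c k‖ * (r : ℝ) ^ k)
    (hd : ∀ r : NNReal, Summable fun k ↦ ‖d k‖ * (r : ℝ) ^ k)
    (h : ∀ z : ℂ, ∑' k, c k * z ^ k = ∑' k, d k * z ^ k) : c = d := by
  have key {c : ℕ → ℂ} (hc : ∀ r : NNReal, Summable fun k ↦ ‖c k‖ * (r : ℝ) ^ k) :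
      HasFPowerSeriesAt (fun z ↦ ∑' k, c k * z ^ k)
        (FormalMultilinearSeries.ofScalars ℂ c) 0 := by
    have hr : (FormalMultilinearSeries.ofScalars ℂ c).radius = ⊤ := by
      refine FormalMultilinearSeries.radius_eq_top_of_summable_norm _ fun r ↦ ?_
      simpa [FormalMultilinearSeries.ofScalars_norm] using hc r
    have := (FormalMultilinearSeries.ofScalars ℂ c).hasFPowerSeriesOnBall (by simp [hr])
    convert! this.hasFPowerSeriesAt using 1
    ext z
    exact (FormalMultilinearSeries.ofScalars_sum_eq c z).symm
  have h' : (fun z : ℂ ↦ ∑' k, c k * z ^ k) = fun z ↦ ∑' k, d k * z ^ k := funext h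
  have h1 := key hc
  rw [h'] at h1
  exact FormalMultilinearSeries.ofScalars_series_injective ℂ ℂ
    (h1.eq_formalMultilinearSeries (key hd))

lemma summable_latTheta_coeff {t : ℝ} (ht : 0 < t) (r : ℝ) (hr : 0 ≤ r) :
    Summable fun k : ℕ ↦ ‖(2 * Real.pi * I) ^ k / k.factorial * latTheta k t‖ * r ^ k := by
  set R : ℝ := 2 * Real.pi * (r + 1)
  have hpi := Real.pi_pos
  have hR : 0 ≤ R := by positivity
  set C := ∑' p : ℤ × ℤ, Real.exp (R * ‖gaussPt p‖) * Real.exp (-Real.pi * latQ p * t)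
  have hq : r / (r + 1) < 1 := by rw [div_lt_one (by positivity)]; linarith
  refine ((summable_geometric_of_lt_one (by positivity) hq).mul_left C).of_nonneg_of_le
    (fun _ ↦ by positivity) fun k ↦ ?_
  -- Compare each coefficient with the sum of the exponentials at radius `r + 1`.
  have h1 : ‖(2 * Real.pi * I) ^ k / k.factorial * latTheta k t‖ * (r + 1) ^ k ≤ C := by
    have hb : ‖latTheta k t‖ ≤ ∑' p : ℤ × ℤ, ‖gaussPt p‖ ^ k * Real.exp (-Real.pi * latQ p * t) := by
      rw [← (hasSum_latTheta k ht).tsum_eq]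
      refine tsum_of_norm_bounded (summable_latTheta_norm k ht).hasSum fun p ↦ ?_
      rw [norm_mul, norm_pow, Complex.norm_real, Real.norm_of_nonneg (by positivity)]
    have hc : ‖(2 * Real.pi * I : ℂ) ^ k / k.factorial‖ = (2 * Real.pi) ^ k / k.factorial := by
      simp [abs_of_pos hpi]
    rw [norm_mul, hc]
    calc (2 * Real.pi) ^ k / k.factorial * ‖latTheta k t‖ * (r + 1) ^ k
        = R ^ k / k.factorial * ‖latTheta k t‖ := by simp only [R, mul_pow]; ring
      _ ≤ R ^ k / k.factorial *
          ∑' p : ℤ × ℤ, ‖gaussPt p‖ ^ k * Real.exp (-Real.pi * latQ p * t) := by gcongr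
      _ = ∑' p : ℤ × ℤ, R ^ k / k.factorial *
          (‖gaussPt p‖ ^ k * Real.exp (-Real.pi * latQ p * t)) := tsum_mul_left.symm
      _ ≤ C := by
        refine ((summable_latTheta_norm k ht).mul_left _).tsum_le_tsum (fun p ↦ ?_)
          (summable_exp_gauss R hR ht)
        rw [← mul_assoc]
        gcongr
        have := Real.pow_div_factorial_le_exp (R * ‖gaussPt p‖) (by positivity) k
        rwa [mul_pow, mul_div_right_comm] at this
  calc ‖(2 * Real.pi * I) ^ k / k.factorial * latTheta k t‖ * r ^ k
      = ‖(2 * Real.pi * I) ^ k / k.factorial * latTheta k t‖ * (r + 1) ^ k * (r / (r + 1)) ^ k := by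
        rw [div_pow]; field_simp
    _ ≤ C * (r / (r + 1)) ^ k := by gcongr

/-- The transformation law of the theta series with harmonic polynomial `(p₁ + i p₂)ᵏ`, read off
by comparing Taylor coefficients in `z` in the transformation law of the generating function. -/
lemma latTheta_inv (k : ℕ) {t : ℝ} (ht : 0 < t) :
    latTheta k t = (1 / t : ℂ) * (-I / t) ^ k * latTheta k t⁻¹ := by
  have ht' : (t : ℂ) ≠ 0 := by exact_mod_cast ht.ne'
  have hcd := coeff_eq_of_tsum_eq
    (c := fun k ↦ (2 * Real.pi * I) ^ k / k.factorial * latTheta k t)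
    (d := fun k ↦ (1 / t : ℂ) * (-I / t) ^ k *
      ((2 * Real.pi * I) ^ k / k.factorial * latTheta k t⁻¹))
    (fun r ↦ summable_latTheta_coeff ht r r.2) (fun r ↦ ?_) (fun z ↦ ?_)
  · have := congrFun hcd k
    have h2 : (2 * Real.pi * I : ℂ) ^ k / k.factorial ≠ 0 :=
      div_ne_zero (pow_ne_zero _ two_pi_I_ne_zero) (by exact_mod_cast k.factorial_ne_zero)
    apply mul_left_cancel₀ h2
    rw [this]
    ring
  · refine ((summable_latTheta_coeff (inv_pos.mpr ht) (t⁻¹ * r) (by positivity)).mul_left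
      t⁻¹).congr fun k ↦ ?_
    have h1 : ‖(1 / t : ℂ)‖ = t⁻¹ := by simp [abs_of_pos ht]
    have h2 : ‖(-I / t : ℂ)‖ = t⁻¹ := by simp [abs_of_pos ht]
    rw [norm_mul (1 / t * (-I / t) ^ k : ℂ), norm_mul (1 / t : ℂ), norm_pow, h1, h2, mul_pow]
    ring
  · rw [← tsum_exp_eq_latTheta z ht, tsum_exp_eq_jacobi z ht, jacobi_prod_inv z ht,
      ← tsum_exp_eq_jacobi _ (inv_pos.mpr ht), tsum_exp_eq_latTheta _ (inv_pos.mpr ht),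
      ← tsum_mul_left]
    refine tsum_congr fun k ↦ ?_
    rw [show -I * z / t = -I / t * z by ring, mul_pow]
    ring

open MeasureTheory

/-! ### The functional equation of `F` by Mellin transform -/

/-- The real part of the theta series of degree `4l`; it is the theta series attached to the
harmonic polynomial `Re (p₁ + i p₂)⁴ˡ`. -/
noncomputable def latThetaRe (l : ℕ) (t : ℝ) : ℂ := ((latTheta (4 * l) t).re : ℂ)

lemma hasSum_latThetaRe (l : ℕ) {t : ℝ} (ht : 0 < t) :
    HasSum (fun p : ℤ × ℤ ↦ ((gaussPt p ^ (4 * l)).re : ℂ) *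
      (Real.exp (-Real.pi * latQ p * t) : ℂ)) (latThetaRe l t) := by
  have h := Complex.hasSum_re (hasSum_latTheta (4 * l) ht)
  have h2 := Complex.hasSum_ofReal.mpr h
  refine h2.congr_fun fun p ↦ ?_
  rw [Complex.re_mul_ofReal, ofReal_mul]

/-- The factor `(-i)ᵏ` of `latTheta_inv` is `1` for `k = 4l`. -/
lemma latThetaRe_inv (l : ℕ) {t : ℝ} (ht : 0 < t) :
    latThetaRe l (1 / t) = ((t ^ (4 * l + 1 : ℝ) : ℝ) : ℂ) * latThetaRe l t := by
  have h := latTheta_inv (4 * l) (inv_pos.mpr ht)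
  have hc : (1 / ((t⁻¹ : ℝ) : ℂ)) * (-I / ((t⁻¹ : ℝ) : ℂ)) ^ (4 * l) =
      ((t ^ (4 * l + 1 : ℝ) : ℝ) : ℂ) := by
    have e : (t ^ (4 * l + 1 : ℝ) : ℝ) = t ^ (4 * l + 1) := by
      rw [← Real.rpow_natCast]; push_cast; rfl
    have h4 : (-I) ^ 4 = 1 := by rw [neg_pow, I_pow_four]; norm_num
    rw [e, div_pow, pow_mul (-I), h4, one_pow]
    push_cast
    rw [one_div, inv_inv, one_div, inv_pow, inv_inv]
    ring
  rw [hc, inv_inv] at h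
  rw [latThetaRe, latThetaRe, one_div, h, Complex.re_ofReal_mul, ofReal_mul]

lemma continuousOn_latTheta (k : ℕ) : ContinuousOn (latTheta k) (Ioi 0) := by
  refine continuousOn_of_forall_continuousAt fun t₀ (ht₀ : 0 < t₀) ↦ ?_
  have h : ContinuousOn (latTheta k) (Ioi (t₀ / 2)) := by
    refine continuousOn_tsum (fun p ↦ by fun_prop)
      (summable_latTheta_norm k (half_pos ht₀)) fun p t (ht : t₀ / 2 < t) ↦ ?_
    rw [norm_mul, norm_pow, Complex.norm_real, Real.norm_of_nonneg (by positivity)]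
    gcongr ?_ * Real.exp ?_
    have := mul_le_mul_of_nonneg_left ht.le (mul_nonneg Real.pi_pos.le (latQ_nonneg p))
    linarith
  exact h.continuousAt (Ioi_mem_nhds (by linarith))

/-- For `k ≠ 0` the theta series has no constant term, so it decays like its terms of norm `1`. -/
lemma norm_latTheta_le (k : ℕ) (hk : k ≠ 0) :
    ∃ C : ℝ, ∀ t : ℝ, 1 ≤ t → ‖latTheta k t‖ ≤ C * Real.exp (-Real.pi * t) := by
  refine ⟨Real.exp Real.pi * ∑' p : ℤ × ℤ, ‖gaussPt p‖ ^ k * Real.exp (-Real.pi * latQ p * 1),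
    fun t ht ↦ ?_⟩
  rw [mul_right_comm, ← tsum_mul_left]
  refine tsum_of_norm_bounded
    ((summable_latTheta_norm k zero_lt_one).mul_left _).hasSum fun p ↦ ?_
  rw [norm_mul, norm_pow, Complex.norm_real, Real.norm_of_nonneg (by positivity)]
  rcases eq_or_ne p 0 with rfl | hp
  · simp [gaussPt_zero, hk]
  · rw [mul_left_comm, ← Real.exp_add, ← Real.exp_add]
    gcongr ?_ * Real.exp ?_
    have := mul_nonneg Real.pi_pos.le
      (mul_nonneg (sub_nonneg.mpr (one_le_latQ hp)) (sub_nonneg.mpr ht))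
    nlinarith

lemma latThetaRe_isBigO (l : ℕ) (hl : 1 ≤ l) (r : ℝ) :
    (fun t ↦ latThetaRe l t - 0) =O[atTop] fun t : ℝ ↦ t ^ r := by
  obtain ⟨C, hC⟩ := norm_latTheta_le (4 * l) (by omega)
  refine Asymptotics.IsBigO.trans ?_ (isLittleO_exp_neg_mul_rpow_atTop Real.pi_pos r).isBigO
  refine Asymptotics.IsBigO.of_bound C ?_
  filter_upwards [eventually_ge_atTop 1] with t ht
  rw [sub_zero, latThetaRe, Complex.norm_real, Real.norm_of_nonneg (Real.exp_pos _).le]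
  exact (Complex.abs_re_le_norm _).trans (hC t ht)

lemma latThetaRe_locallyIntegrable (l : ℕ) :
    LocallyIntegrableOn (latThetaRe l) (Ioi 0) := by
  refine ContinuousOn.locallyIntegrableOn ?_ measurableSet_Ioi
  exact continuous_ofReal.comp_continuousOn
    (continuous_re.comp_continuousOn (continuousOn_latTheta _))

/-- The theta series of degree `4l` paired with itself, of weight `4l + 1` and sign `1`. -/
noncomputable def latFEPair (l : ℕ) (hl : 1 ≤ l) : WeakFEPair ℂ where
  f := latThetaRe l
  g := latThetaRe l
  k := 4 * l + 1
  ε := 1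
  f₀ := 0
  g₀ := 0
  hf_int := latThetaRe_locallyIntegrable l
  hg_int := latThetaRe_locallyIntegrable l
  hk := by positivity
  hε := one_ne_zero
  h_feq := fun t ht ↦ by rw [latThetaRe_inv l ht, one_mul, smul_eq_mul]
  hf_top := latThetaRe_isBigO l hl
  hg_top := latThetaRe_isBigO l hl

lemma isStrong_latFEPair (l : ℕ) (hl : 1 ≤ l) : IsStrongFEPair (latFEPair l hl) := ⟨rfl, rfl⟩

lemma mellin_latThetaRe_symm (l : ℕ) (hl : 1 ≤ l) (s : ℂ) :
    mellin (latThetaRe l) (4 * l + 1 - s) = mellin (latThetaRe l) s := by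
  have h := (latFEPair l hl).functional_equation s
  have h1 := ((isStrong_latFEPair l hl).hasMellin (4 * l + 1 - s)).2
  have h2 := ((isStrong_latFEPair l hl).symm.hasMellin s).2
  have hk : (((latFEPair l hl).k : ℝ) : ℂ) = 4 * l + 1 := by simp [latFEPair]
  have he : (latFEPair l hl).ε = 1 := rfl
  rw [hk, he, one_smul] at h
  exact h1.trans (h.trans h2.symm)

lemma differentiable_mellin_latThetaRe (l : ℕ) (hl : 1 ≤ l) :
    Differentiable ℂ (mellin (latThetaRe l)) := by
  have h := (isStrong_latFEPair l hl).differentiable_Λ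
  have e : mellin (latThetaRe l) = (latFEPair l hl).Λ :=
    funext fun s ↦ ((isStrong_latFEPair l hl).hasMellin s).2
  rwa [e]

lemma mellin_latThetaRe_conj (l : ℕ) (s : ℂ) :
    mellin (latThetaRe l) (starRingEnd ℂ s) = starRingEnd ℂ (mellin (latThetaRe l) s) := by
  rw [mellin, mellin, ← integral_conj]
  refine setIntegral_congr_fun measurableSet_Ioi fun t (ht : 0 < t) ↦ ?_
  simp only [smul_eq_mul, map_mul, latThetaRe, conj_ofReal]
  congr 1
  have harg : (t : ℂ).arg ≠ Real.pi := by
    rw [arg_ofReal_of_nonneg ht.le]; exact Real.pi_ne_zero.symm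
  have := Complex.cpow_conj t (s - 1) harg
  rwa [map_sub, map_one, conj_ofReal] at this

lemma summable_latQ_rpow {σ : ℝ} (hσ : 1 < σ) :
    Summable fun p : ℤ × ℤ ↦ if p = 0 then 0 else latQ p ^ (-σ) := by
  have h := EisensteinSeries.summable_one_div_norm_rpow (k := 2 * σ) (by linarith)
  rw [← (finTwoArrowEquiv _).symm.summable_iff] at h
  refine h.of_nonneg_of_le (fun p ↦ ?_) fun p ↦ ?_
  · split_ifs
    · rfl
    · exact Real.rpow_nonneg (latQ_nonneg p) _
  · split_ifs with hp
    · exact Real.rpow_nonneg (norm_nonneg _) _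
    · set x : Fin 2 → ℤ := (finTwoArrowEquiv ℤ).symm p
      have hx0 : x ≠ 0 := by
        intro h0
        apply hp
        have h0' := congrFun h0 0
        have h1' := congrFun h0 1
        exact Prod.ext h0' h1'
      have hx : 0 < ‖x‖ := norm_pos_iff.mpr hx0
      have hle : ‖x‖ ^ (2 : ℝ) ≤ latQ p := by
        rw [Real.rpow_two]
        have hb : ‖x‖ ≤ ‖gaussPt p‖ := by
          refine (pi_norm_le_iff_of_nonneg (norm_nonneg _)).mpr fun i ↦ ?_
          fin_cases i
          · have := Complex.abs_re_le_norm (gaussPt p)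
            simpa [gaussPt, x, Int.norm_eq_abs] using this
          · have := Complex.abs_im_le_norm (gaussPt p)
            simpa [gaussPt, x, Int.norm_eq_abs] using this
        rw [← norm_gaussPt_sq]
        gcongr
      change latQ p ^ (-σ) ≤ ‖x‖ ^ (-(2 * σ))
      rw [show -(2 * σ) = 2 * (-σ) by ring, Real.rpow_mul hx.le]
      exact Real.rpow_le_rpow_of_nonpos (by positivity) hle (by linarith)

/-- The Mellin transform of the theta series is the completed angular lattice sum. -/
lemma mellin_latThetaRe_eq (l : ℕ) (hl : 1 ≤ l) {s : ℂ} (hs : 1 < s.re) :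
    mellin (latThetaRe l) (s + 2 * l) =
      (Real.pi : ℂ) ^ (-(s + 2 * l)) * Gamma (s + 2 * l) * latC 1 (4 * l) s := by
  have hre : (s + 2 * l).re = s.re + 2 * l := by simp
  have hpow (p : ℤ × ℤ) : ‖gaussPt p‖ ^ (4 * l) = latQ p ^ (2 * l) := by
    rw [← norm_gaussPt_sq, ← pow_mul]; ring_nf
  have hM := hasSum_mellin_pi_mul (a := fun p ↦ ((gaussPt p ^ (4 * l)).re : ℂ)) (q := latQ)
    (F := latThetaRe l) (s := s + 2 * l) (fun p ↦ ?_) (by rw [hre]; positivity)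
    (fun t ht ↦ by exact_mod_cast hasSum_latThetaRe l ht) ?_
  · rw [← hM.tsum_eq, latC, ← tsum_mul_left]
    have hsupp : Function.support (fun p : ℤ × ℤ ↦ (Real.pi : ℂ) ^ (-(s + 2 * l)) *
        Gamma (s + 2 * l) * ((gaussPt p ^ (4 * l)).re : ℂ) / (latQ p : ℂ) ^ (s + 2 * l)) ⊆
        {p | p ≠ 0} := by
      intro p hp h0
      apply hp
      subst h0
      simp [gaussPt_zero, show l ≠ 0 by omega]
    rw [← tsum_subtype_eq_of_support_subset hsupp]
    refine tsum_congr fun ⟨p, hp⟩ ↦ ?_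
    have hq : 0 < latQ p := zero_lt_one.trans_le (one_le_latQ hp)
    have hqc : (latQ p : ℂ) ≠ 0 := by exact_mod_cast hq.ne'
    have hg : (gaussPt p ^ (4 * l)).re =
        latQ p ^ (2 * l) * Real.cos ((4 * l : ℕ) * latticeAngle p) := by
      rw [← hpow]
      conv_lhs => rw [← Complex.norm_mul_exp_arg_mul_I (gaussPt p)]
      rw [mul_pow, ← Complex.exp_nat_mul, ← ofReal_pow, Complex.re_ofReal_mul, ← mul_assoc,
        ← ofReal_natCast, ← ofReal_mul, Complex.exp_ofReal_mul_I_re]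
      rfl
    have hQ : ((p.1 : ℂ)) ^ 2 + ((p.2 : ℂ)) ^ 2 = (latQ p : ℂ) := by simp [latQ]
    have hcp : (latQ p : ℂ) ^ (s + 2 * l) = (latQ p : ℂ) ^ s * (latQ p : ℂ) ^ (2 * l) := by
      rw [Complex.cpow_add _ _ hqc, ← Complex.cpow_natCast]
      push_cast; rfl
    have hne : (latQ p : ℂ) ^ s ≠ 0 := by simp [Complex.cpow_eq_zero_iff, hqc]
    simp only [hQ, hg, hcp, pow_one]
    push_cast
    field_simp
  · rcases eq_or_ne p 0 with rfl | hp
    · left; simp [gaussPt_zero, show l ≠ 0 by omega]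
    · right; exact zero_lt_one.trans_le (one_le_latQ hp)
  · refine (summable_latQ_rpow hs).of_nonneg_of_le
      (fun p ↦ div_nonneg (norm_nonneg _) (Real.rpow_nonneg (latQ_nonneg p) _)) fun p ↦ ?_
    split_ifs with hp
    · subst hp; simp [gaussPt_zero, show l ≠ 0 by omega]
    · have hq : 0 < latQ p := zero_lt_one.trans_le (one_le_latQ hp)
      have h1 : ‖((gaussPt p ^ (4 * l)).re : ℂ)‖ ≤ latQ p ^ (2 * l) := by
        rw [← hpow, ← norm_pow, Complex.norm_real]
        exact Complex.abs_re_le_norm _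
      rw [hre, div_le_iff₀ (Real.rpow_pos_of_pos hq _), ← Real.rpow_add hq]
      refine h1.trans_eq ?_
      rw [← Real.rpow_natCast]
      congr 1
      push_cast; ring

/-- The completed `F` is the Mellin transform of the theta series on the half plane `Re s > 0`. -/
lemma completed_eq_mellin (l : ℕ) (hl : 1 ≤ l) (F : ℂ → ℂ) (hF : Differentiable ℂ F)
    (hFeq : ∀ s : ℂ, 1 < s.re → F s = latC 1 (4 * l) s) {s : ℂ} (hs : 0 < s.re) :
    mellin (latThetaRe l) (s + 2 * l) =
      (Real.pi : ℂ) ^ (-(s + 2 * l)) * Gamma (s + 2 * l) * F s := by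
  have hU : IsOpen {s : ℂ | 0 < s.re} := isOpen_lt continuous_const continuous_re
  have hpi : (Real.pi : ℂ) ≠ 0 := by exact_mod_cast Real.pi_ne_zero
  have hA : AnalyticOnNhd ℂ (fun s ↦ mellin (latThetaRe l) (s + 2 * l)) {s : ℂ | 0 < s.re} :=
    DifferentiableOn.analyticOnNhd (Differentiable.differentiableOn
      ((differentiable_mellin_latThetaRe l hl).comp (by fun_prop))) hU
  have hB : AnalyticOnNhd ℂ (fun s : ℂ ↦ (Real.pi : ℂ) ^ (-(s + 2 * l)) *
      Gamma (s + 2 * l) * F s) {s : ℂ | 0 < s.re} := by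
    refine DifferentiableOn.analyticOnNhd (fun z (hz : 0 < z.re) ↦ ?_) hU
    refine DifferentiableAt.differentiableWithinAt ?_
    have hG : DifferentiableAt ℂ (fun s : ℂ ↦ Gamma (s + 2 * l)) z := by
      refine DifferentiableAt.comp z (Complex.differentiableAt_Gamma _ fun m h ↦ ?_) (by fun_prop)
      have := congrArg Complex.re h
      simp at this
      have h1 : (0 : ℝ) ≤ m := m.cast_nonneg
      have h2 : (0 : ℝ) ≤ l := l.cast_nonneg
      linarith
    exact ((DifferentiableAt.const_cpow (by fun_prop) (Or.inl hpi)).mul hG).mul (hF z)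
  have hconv : IsPreconnected {s : ℂ | 0 < s.re} := (convex_halfSpace_re_gt 0).isPreconnected
  refine hA.eqOn_of_preconnected_of_eventuallyEq hB hconv (z₀ := 2) (by simp) ?_ hs
  filter_upwards [(isOpen_lt continuous_const continuous_re).mem_nhds
    (show (2 : ℂ) ∈ {s : ℂ | 1 < s.re} by simp)] with z (hz : 1 < z.re)
  rw [mellin_latThetaRe_eq l hl hz, hFeq z hz]

/-! ### The nontrivial character modulo 4 and the completed `ζ(s) L₋₄(s)` -/

section QuadraticCharacter

variable {χ : DirichletCharacter ℂ 4}

lemma chi_three (hχ : χ ≠ 1) : χ 3 = -1 := by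
  have h1 : χ 3 * χ 3 = 1 := by
    rw [← map_mul, show (3 : ZMod 4) * 3 = 1 by decide, map_one]
  rcases mul_self_eq_one_iff.mp h1 with h | h
  · exfalso
    apply hχ
    refine MulChar.ext fun u ↦ ?_
    have hu : (u : ZMod 4) = 1 ∨ (u : ZMod 4) = 3 := by revert u; decide
    rw [MulChar.one_apply_coe]
    rcases hu with hu | hu <;> rw [hu]
    · exact map_one χ
    · exact h
  · exact h

lemma chi_two : χ 2 = 0 := χ.map_nonunit (by decide)

lemma chi_conj (hχ : χ ≠ 1) (a : ZMod 4) : starRingEnd ℂ (χ a) = χ a := by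
  have ha : a = 0 ∨ a = 1 ∨ a = 2 ∨ a = 3 := by revert a; decide
  rcases ha with rfl | rfl | rfl | rfl
  · simp [χ.map_zero' (by norm_num)]
  · simp
  · simp [chi_two]
  · simp [chi_three hχ]

lemma chi_inv (hχ : χ ≠ 1) : χ⁻¹ = χ := by
  refine inv_eq_of_mul_eq_one_left (MulChar.ext fun u ↦ ?_)
  have hu : (u : ZMod 4) = 1 ∨ (u : ZMod 4) = 3 := by revert u; decide
  rw [MulChar.one_apply_coe, MulChar.mul_apply]
  rcases hu with hu | hu <;> rw [hu]
  · simp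
  · simp [chi_three hχ]

lemma chi_odd (hχ : χ ≠ 1) : χ.Odd := by
  rw [DirichletCharacter.Odd, show (-1 : ZMod 4) = 3 by decide, chi_three hχ]

lemma chi_primitive (hχ : χ ≠ 1) : χ.IsPrimitive := by
  have hd := χ.conductor_dvd_level
  have hle := Nat.le_of_dvd (by norm_num) hd
  rw [DirichletCharacter.isPrimitive_def]
  have h1 : χ.conductor ≠ 1 := fun h ↦ hχ ((DirichletCharacter.eq_one_iff_conductor_eq_one).mpr h)
  have h2 : χ.conductor ≠ 2 := by
    intro h
    -- A character factoring through `ZMod 2` is trivial on `3`.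
    have hf := χ.factorsThrough_conductor
    rw [h] at hf
    obtain ⟨hdvd, χ₀, h₀⟩ := hf
    apply hχ
    rw [h₀, show χ₀ = 1 from MulChar.ext fun u ↦ by
      rw [show u = 1 from Subsingleton.elim _ _]; simp]
    exact DirichletCharacter.changeLevel_one hdvd
  interval_cases h : χ.conductor <;> omega

/-- The Gauss sum is `i - (-i) = 2i`, which equals `i √4`. -/
lemma chi_rootNumber (hχ : χ ≠ 1) : χ.rootNumber = 1 := by
  have hne : ¬ χ.Even := (chi_odd hχ).not_even
  have hs : gaussSum χ (ZMod.stdAddChar (N := 4)) = 2 * I := by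
    have h1 : ZMod.stdAddChar (1 : ZMod 4) = I := by
      have := ZMod.stdAddChar_coe (N := 4) 1
      rw [Int.cast_one] at this
      rw [this]
      rw [show (2 * Real.pi * I * ((1 : ℤ) : ℂ) / ((4 : ℕ) : ℂ)) = Real.pi / 2 * I by
        push_cast; ring, Complex.exp_pi_div_two_mul_I]
    have h3 : ZMod.stdAddChar (3 : ZMod 4) = -I := by
      rw [show (3 : ZMod 4) = 1 + 1 + 1 by decide, AddChar.map_add_eq_mul,
        AddChar.map_add_eq_mul, h1]
      linear_combination I * I_sq
    rw [gaussSum, show (Finset.univ : Finset (ZMod 4)) = {0, 1, 2, 3} by decide]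
    rw [Finset.sum_insert (by decide), Finset.sum_insert (by decide),
      Finset.sum_insert (by decide), Finset.sum_singleton, h1, h3, chi_two, chi_three hχ,
      χ.map_zero' (by norm_num), map_one]
    ring
  have h4 : ((4 : ℕ) : ℂ) ^ (1 / 2 : ℂ) = 2 := by
    rw [show ((4 : ℕ) : ℂ) = ((2 : ℝ) : ℂ) * ((2 : ℝ) : ℂ) by norm_num,
      Complex.mul_cpow_ofReal_nonneg (by norm_num) (by norm_num), ofReal_ofNat,
      ← Complex.cpow_add _ _ two_ne_zero]
    norm_num
  rw [DirichletCharacter.rootNumber, hs, if_neg hne, h4, pow_one]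
  field_simp

/-- The character is real-valued, so its L-function commutes with conjugation; this is clear from
the Dirichlet series on `Re s > 1` and extends by the identity theorem. -/
lemma LFunction_conj (hχ : χ ≠ 1) (s : ℂ) :
    χ.LFunction (starRingEnd ℂ s) = starRingEnd ℂ (χ.LFunction s) := by
  have hd := DirichletCharacter.differentiable_LFunction hχ
  have hd' : Differentiable ℂ (starRingEnd ℂ ∘ χ.LFunction ∘ starRingEnd ℂ) := fun z ↦ by
    have := (hd (starRingEnd ℂ z)).conj_conj
    rwa [conj_conj] at this
  have key : χ.LFunction = starRingEnd ℂ ∘ χ.LFunction ∘ starRingEnd ℂ := by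
    refine (hd.differentiableOn.analyticOnNhd isOpen_univ).eq_of_eventuallyEq
      (hd'.differentiableOn.analyticOnNhd isOpen_univ) (z₀ := 2) ?_
    filter_upwards [(isOpen_lt continuous_const continuous_re).mem_nhds
      (show (2 : ℂ) ∈ {s : ℂ | 1 < s.re} by simp)] with z (hz : 1 < z.re)
    simp only [Function.comp_apply]
    rw [χ.LFunction_eq_LSeries hz, χ.LFunction_eq_LSeries (by simpa using hz), LSeries, LSeries,
      Complex.conj_tsum]
    refine tsum_congr fun n ↦ ?_
    rw [LSeries.term_def, LSeries.term_def]
    split_ifs with hn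
    · simp
    · have harg : ((n : ℝ) : ℂ).arg ≠ Real.pi := by
        rw [arg_ofReal_of_nonneg n.cast_nonneg]; exact Real.pi_ne_zero.symm
      have := Complex.cpow_conj (n : ℝ) z harg
      rw [conj_ofReal, ofReal_natCast] at this
      rw [map_div₀, chi_conj hχ, this, conj_conj]
  have := congrFun key (starRingEnd ℂ s)
  simpa using this

/-- The completed function `π⁻ˢ Γ(s) ζ(s) L₋₄(s)` is symmetric under `s ↦ 1 - s`. -/
lemma completed_zetaL_symm (hχ : χ ≠ 1) {s : ℂ} (h0 : 0 < s.re) (h1 : s.re < 1) :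
    (Real.pi : ℂ) ^ (-(1 - s)) * Gamma (1 - s) *
        (riemannZeta (1 - s) * χ.LFunction (1 - s)) =
      (Real.pi : ℂ) ^ (-s) * Gamma s * (riemannZeta s * χ.LFunction s) := by
  -- By the duplication formula the function is `2ˢ / 2` times the product of the two completed
  -- L-functions.
  have key {s : ℂ} (h0 : 0 < s.re) : 2 * ((Real.pi : ℂ) ^ (-s) * Gamma s *
      (riemannZeta s * χ.LFunction s)) =
      2 ^ s * (completedRiemannZeta s * χ.completedLFunction s) := by
    have hs : s ≠ 0 := by rintro rfl; simp at h0
    have hg1 := Complex.Gammaℝ_ne_zero_of_re_pos h0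
    have hg2 : (s + 1).Gammaℝ ≠ 0 :=
      Complex.Gammaℝ_ne_zero_of_re_pos (by simp only [add_re, one_re]; linarith)
    have hmul := Complex.Gammaℝ_mul_Gammaℝ_add_one s
    rw [Complex.Gammaℂ_def] at hmul
    have h2 : (2 * (Real.pi : ℂ)) ^ (-s) = 2 ^ (-s) * (Real.pi : ℂ) ^ (-s) := by
      have := Complex.mul_cpow_ofReal_nonneg (a := 2) (b := Real.pi) (by norm_num)
        Real.pi_pos.le (-s)
      exact_mod_cast this
    have h22 : (2 : ℂ) ^ s * 2 ^ (-s) = 1 := by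
      rw [← Complex.cpow_add _ _ two_ne_zero]; simp
    rw [riemannZeta_def_of_ne_zero hs,
      χ.LFunction_eq_completed_div_gammaFactor s (Or.inl hs), (chi_odd hχ).gammaFactor_def,
      div_mul_div_comm, hmul, h2]
    have hG : Gamma s ≠ 0 := Complex.Gamma_ne_zero_of_re_pos h0
    have hp : (Real.pi : ℂ) ^ (-s) ≠ 0 := by
      simp [Complex.cpow_eq_zero_iff, Real.pi_ne_zero]
    have h2s : (2 : ℂ) ^ (-s) ≠ 0 := by simp [Complex.cpow_eq_zero_iff]
    field_simp
    linear_combination (-(completedRiemannZeta s * χ.completedLFunction s)) * h22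
  apply mul_left_cancel₀ (two_ne_zero (α := ℂ))
  rw [key h0, key (s := 1 - s) (by simpa using h1), completedRiemannZeta_one_sub,
    (chi_primitive hχ).completedLFunction_one_sub, chi_inv hχ, chi_rootNumber hχ]
  have h4 : ((4 : ℕ) : ℂ) ^ (s - 1 / 2) = 2 ^ (2 * s - 1) := by
    rw [show 2 * s - 1 = ((2 : ℕ) : ℂ) * (s - 1 / 2) by push_cast; ring,
      Complex.cpow_nat_mul, show ((4 : ℕ) : ℂ) = ((2 : ℝ) : ℂ) * ((2 : ℝ) : ℂ) by norm_num,
      Complex.mul_cpow_ofReal_nonneg (by norm_num) (by norm_num)]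
    push_cast
    ring
  have h5 : (2 : ℂ) ^ (1 - s) * 2 ^ (2 * s - 1) = 2 ^ s := by
    rw [← Complex.cpow_add _ _ two_ne_zero]; congr 1; ring
  rw [h4]
  linear_combination (completedRiemannZeta s * χ.completedLFunction s) * h5

lemma one_sub_half_add (t : ℝ) :
    1 - (1 / 2 + t * I : ℂ) = starRingEnd ℂ (1 / 2 + t * I) := by
  simp only [map_add, map_div₀, map_one, map_mul, conj_ofReal, conj_I, map_ofNat]
  ring

lemma half_add_re (t : ℝ) : (1 / 2 + t * I : ℂ).re = 1 / 2 := by simp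

/-- On the critical line `1 - s` is the conjugate of `s`, so the functional equation makes the
completed function real there. -/
lemma completed_zetaL_im (hχ : χ ≠ 1) (t : ℝ) :
    ((Real.pi : ℂ) ^ (-(1 / 2 + t * I : ℂ)) * Gamma (1 / 2 + t * I) *
      (riemannZeta (1 / 2 + t * I) * χ.LFunction (1 / 2 + t * I))).im = 0 := by
  have hre := half_add_re t
  have h := completed_zetaL_symm hχ (s := 1 / 2 + t * I) (by rw [hre]; norm_num)
    (by rw [hre]; norm_num)
  rw [one_sub_half_add] at h
  rw [← Complex.conj_eq_iff_im, ← h]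
  set s : ℂ := 1 / 2 + t * I
  have harg : (Real.pi : ℂ).arg ≠ Real.pi := by
    rw [arg_ofReal_of_nonneg Real.pi_pos.le]; exact Real.pi_ne_zero.symm
  have := Complex.cpow_conj Real.pi (-s) harg
  rw [map_neg, conj_ofReal] at this
  simp only [this, Complex.Gamma_conj, riemannZeta_conj, LFunction_conj hχ, map_mul, conj_conj]
  rw [this, Complex.Gamma_conj, riemannZeta_conj, LFunction_conj hχ] at h
  exact h.symm

end QuadraticCharacter

/-! ### Real values on the critical line and the argument of the Gamma quotient -/

/-- The point `1/2 + 2l + it` lies on the symmetry line of the Mellin transform, which is therefore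
real there. -/
lemma mellin_latThetaRe_im (l : ℕ) (hl : 1 ≤ l) (t : ℝ) :
    (mellin (latThetaRe l) (1 / 2 + t * I + 2 * l)).im = 0 := by
  rw [← Complex.conj_eq_iff_im, ← mellin_latThetaRe_conj, ← mellin_latThetaRe_symm l hl]
  congr 1
  rw [map_add, ← one_sub_half_add]
  simp only [map_mul, map_ofNat, map_natCast]
  ring

lemma Gamma_add_nat_eq (s : ℂ) (hs : 0 < s.re) (n : ℕ) :
    Gamma (s + n) = (∏ j ∈ Finset.range n, (s + j)) * Gamma s := by
  induction n with
  | zero => simp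
  | succ n ih =>
    have hne : s + n ≠ 0 := by
      intro h
      have := congrArg Complex.re h
      simp at this
      have h1 : (0 : ℝ) ≤ n := n.cast_nonneg
      linarith
    rw [Nat.cast_succ, ← add_assoc, Complex.Gamma_add_one _ hne, ih, Finset.prod_range_succ]
    ring

/-- High up on the critical line, `s (s+1) ⋯ (s+2l-1)` is not real: after division by `(it)²ˡ` its
imaginary part, as a function of `x = 1/t`, vanishes at `0` with nonzero derivative. -/
lemma exists_prod_im_ne_zero (l : ℕ) (hl : 1 ≤ l) :
    ∃ T₀ : ℝ, 0 < T₀ ∧ ∀ t : ℝ, T₀ ≤ t →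
      (∏ j ∈ Finset.range (2 * l), ((1 / 2 + t * I : ℂ) + j)).im ≠ 0 := by
  set f : ℝ → ℂ := fun x ↦ ∏ j ∈ Finset.range (2 * l), (1 - I * (1 / 2 + j) * x)
  have hf : HasDerivAt f (-I * ((∑ j ∈ Finset.range (2 * l), (1 / 2 + j : ℝ) : ℝ) : ℂ)) 0 := by
    have h := HasDerivAt.fun_finsetProd (x := (0 : ℝ)) (u := Finset.range (2 * l))
      (f := fun (j : ℕ) (x : ℝ) ↦ (1 - I * (1 / 2 + j) * x : ℂ))
      (f' := fun j : ℕ ↦ -(I * (1 / 2 + j) : ℂ)) (fun j _ ↦ by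
        have := ((Complex.ofRealCLM.hasDerivAt (x := (0 : ℝ))).const_mul
          (I * (1 / 2 + j) : ℂ)).const_sub 1
        simpa using this)
    convert! h using 1
    simp [Finset.mul_sum]
  have him : HasDerivAt (fun x ↦ (f x).im)
      (-(∑ j ∈ Finset.range (2 * l), (1 / 2 + j : ℝ))) 0 := by
    have := Complex.imCLM.hasFDerivAt.comp_hasDerivAt (0 : ℝ) hf
    simpa using! this
  have hsum : 0 < ∑ j ∈ Finset.range (2 * l), (1 / 2 + j : ℝ) :=
    Finset.sum_pos (fun _ _ ↦ by positivity) ⟨0, by simp; omega⟩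
  have hev := him.eventually_ne (c := 0) (neg_ne_zero.mpr hsum.ne')
  have hev2 : ∀ᶠ t : ℝ in atTop, (f t⁻¹).im ≠ 0 :=
    tendsto_inv_atTop_nhdsGT_zero.eventually
      (hev.filter_mono (nhdsWithin_mono _ fun x (hx : 0 < x) ↦ hx.ne'))
  obtain ⟨T, hT⟩ := (hev2.and (eventually_gt_atTop 0)).exists_forall_of_atTop
  refine ⟨max T 1, by positivity, fun t ht ↦ ?_⟩
  obtain ⟨h1, h2⟩ := hT t ((le_max_left _ _).trans ht)
  have ht' : (t : ℂ) ≠ 0 := by exact_mod_cast h2.ne'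
  have e : (∏ j ∈ Finset.range (2 * l), ((1 / 2 + t * I : ℂ) + j)) =
      (((-1) ^ l * t ^ (2 * l) : ℝ) : ℂ) * f t⁻¹ := by
    have e1 : ∀ j ∈ Finset.range (2 * l), ((1 / 2 + t * I : ℂ) + j) =
        (I * t) * (1 - I * (1 / 2 + j) * (t⁻¹ : ℝ)) := fun j _ ↦ by
      push_cast
      field_simp
      linear_combination (1 + 2 * (j : ℂ)) * I_sq
    rw [Finset.prod_congr rfl e1, Finset.prod_mul_distrib, Finset.prod_const, Finset.card_range,
      mul_pow, pow_mul I, I_sq]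
    push_cast
    simp [f]
  rw [e, Complex.im_ofReal_mul]
  refine mul_ne_zero (mul_ne_zero ?_ (pow_ne_zero _ h2.ne')) h1
  exact pow_ne_zero _ (by norm_num)

/-- For `l ≥ 1` and nonzero reals `α, β`, there is `T₀ > 0` such that for `t ≥ T₀`,
if `α F_{4l}(1/2+it) + β·4ζ(1/2+it)L₋₄(1/2+it) = 0` then both factors vanish. -/
theorem no_zero_of_real_combination_with_zeta (l : ℕ) (hl : 1 ≤ l)
    (α β : ℝ) (hα : α ≠ 0) (hβ : β ≠ 0)
    (χ : DirichletCharacter ℂ 4) (hχ : χ ≠ 1)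
    (F : ℂ → ℂ) (hF : Differentiable ℂ F)
    (hFeq : ∀ s : ℂ, 1 < s.re → F s = latC 1 (4 * l) s) :
    ∃ T₀ : ℝ, 0 < T₀ ∧ ∀ t : ℝ, T₀ ≤ t →
      (α : ℂ) * F (1 / 2 + t * Complex.I) +
          (β : ℂ) * (4 * riemannZeta (1 / 2 + t * Complex.I) *
            χ.LFunction (1 / 2 + t * Complex.I)) = 0 →
      F (1 / 2 + t * Complex.I) = 0 ∧
        riemannZeta (1 / 2 + t * Complex.I) * χ.LFunction (1 / 2 + t * Complex.I) = 0 := by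
  obtain ⟨T₀, hT₀, hT⟩ := exists_prod_im_ne_zero l hl
  refine ⟨T₀, hT₀, fun t ht hzero ↦ ?_⟩
  have hP := hT t ht
  have hM := mellin_latThetaRe_im l hl t
  have hW := completed_zetaL_im hχ t
  have hre : 0 < (1 / 2 + t * I : ℂ).re := by rw [half_add_re]; norm_num
  rw [completed_eq_mellin l hl F hF hFeq hre] at hM
  have hGs := Gamma_add_nat_eq (1 / 2 + t * I) hre (2 * l)
  have hG : Gamma (1 / 2 + t * I) ≠ 0 := Complex.Gamma_ne_zero_of_re_pos hre
  generalize (1 / 2 + t * I : ℂ) = s at *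
  push_cast at hGs
  set P := ∏ j ∈ Finset.range (2 * l), (s + j)
  set W := (Real.pi : ℂ) ^ (-s) * Gamma s * (riemannZeta s * χ.LFunction s)
  set M := (Real.pi : ℂ) ^ (-(s + 2 * l)) * Gamma (s + 2 * l) * F s
  have hpi : (Real.pi : ℂ) ≠ 0 := by exact_mod_cast Real.pi_ne_zero
  have hp : (Real.pi : ℂ) ^ (-s) ≠ 0 := by simp [Complex.cpow_eq_zero_iff, Real.pi_ne_zero]
  -- Multiplying the vanishing combination by `π⁻ˢ Γ(s + 2l)` makes all factors but `P` real.
  have hlin : ((α * Real.pi ^ (2 * l) : ℝ) : ℂ) * M + ((4 * β : ℝ) : ℂ) * (P * W) = 0 := by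
    have hsplit : (Real.pi : ℂ) ^ (-(s + 2 * l)) * (Real.pi : ℂ) ^ (2 * l) =
        (Real.pi : ℂ) ^ (-s) := by
      rw [← Complex.cpow_natCast, ← Complex.cpow_add _ _ hpi]
      congr 1; push_cast; ring
    simp only [M, W, hGs]
    push_cast
    linear_combination (Real.pi : ℂ) ^ (-s) * P * Gamma s * hzero +
      α * P * Gamma s * F s * hsplit
  have hWre : W = (W.re : ℂ) := Complex.ext rfl (by simpa using hW)
  have him := congrArg Complex.im hlin
  rw [hWre, Complex.add_im, Complex.im_ofReal_mul, hM, Complex.im_ofReal_mul,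
    Complex.im_mul_ofReal, Complex.zero_im, mul_zero, zero_add] at him
  have hW0 : W = 0 := by
    rw [hWre]
    have : W.re = 0 := by
      rcases mul_eq_zero.mp him with h | h
      · exact absurd h (mul_ne_zero four_ne_zero hβ)
      · exact (mul_eq_zero.mp h).resolve_left hP
    rw [this, ofReal_zero]
  have hZ : riemannZeta s * χ.LFunction s = 0 :=
    (mul_eq_zero.mp hW0).resolve_left (mul_ne_zero hp hG)
  refine ⟨?_, hZ⟩
  rw [mul_assoc 4, hZ, mul_zero, mul_zero, add_zero] at hzero
  exact (mul_eq_zero.mp hzero).resolve_left (by exact_mod_cast hα)
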